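/- arXiv:0708.3722 — 4 statements merged into one kernel-verified Lean document; each statement's English description precedes it below -/
import Mathlib

section
/- Sterbenz's theorem: Let β ≥ 2 be an integer radix, p ≥ 2 an integer precision, and e_min an integer minimal exponent. If x and y are p-digit radix-β floating-point numbers and y/2 ≤ x ≤ 2y, then x − y is also a p-digit radix-β floating-point number. -/
noncomputable section

/-- `x` is a `k`-digit radix-`β` floating-point number with minimal exponent `emin`:
there exist integers `m`, `e` with `|m| < β^k`, `e ≥ emin` and `x = m·β^e`. -/
def IsFPNb (β emin k : ℤ) (x : ℝ) : Prop :=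
  ∃ m e : ℤ, |(m : ℝ)| < (β : ℝ) ^ k ∧ emin ≤ e ∧ x = (m : ℝ) * (β : ℝ) ^ e

/-! Suppose `x` is a multiple of `β ^ e` and `y` a multiple of `β ^ f`. Then `x - y` is a multiple
of the finer of the two steps, and it needs no more digits than the operand with that step as soon
as it is bounded in magnitude by both operands, which is what `y / 2 ≤ x ≤ 2 * y` guarantees. -/

open AddSubgroup (zmultiples)

theorem antitone_zmultiples_zpow {K : Type*} [DivisionRing K] {β : ℤ} (hβ : (β : K) ≠ 0) :
    Antitone fun e : ℤ ↦ zmultiples ((β : K) ^ e) := by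
  intro e f hef
  obtain ⟨d, rfl⟩ := Int.le.dest hef
  refine AddSubgroup.zmultiples_le_of_mem (AddSubgroup.mem_zmultiples_iff.mpr ⟨β ^ d, ?_⟩)
  rw [add_comm, zpow_add₀ hβ, zpow_natCast, zsmul_eq_mul, Int.cast_pow]

theorem abs_sub_le_min_abs_of_half_le_of_le_two_mul {K : Type*} [Field K] [LinearOrder K]
    [IsStrictOrderedRing K] {x y : K} (hyx : y / 2 ≤ x) (hxy : x ≤ 2 * y) :
    |x - y| ≤ min |x| |y| := by
  have hx : 0 ≤ x := by linarith
  have hy : 0 ≤ y := by linarith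
  rw [abs_of_nonneg hx, abs_of_nonneg hy, le_min_iff, abs_le, abs_le]
  refine ⟨⟨?_, ?_⟩, ?_, ?_⟩ <;> linarith

theorem isFPNb_iff_exists_mem_zmultiples {β emin k : ℤ} {x : ℝ} (hβ : β ≠ 0) :
    IsFPNb β emin k x ↔
      ∃ e, emin ≤ e ∧ x ∈ zmultiples ((β : ℝ) ^ e) ∧ |x| < (β : ℝ) ^ k * |(β : ℝ) ^ e| := by
  have abs_lt_iff (m e : ℤ) :
      |(m : ℝ) * (β : ℝ) ^ e| < (β : ℝ) ^ k * |(β : ℝ) ^ e| ↔ |(m : ℝ)| < (β : ℝ) ^ k := by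
    have hpos : 0 < |(β : ℝ) ^ e| := abs_pos.mpr (zpow_ne_zero e (Int.cast_ne_zero.mpr hβ))
    rw [abs_mul, mul_lt_mul_iff_left₀ hpos]
  constructor
  · rintro ⟨m, e, hm, he, rfl⟩
    exact ⟨e, he, ⟨m, zsmul_eq_mul _ _⟩, (abs_lt_iff m e).mpr hm⟩
  · rintro ⟨e, he, hx, hlt⟩
    obtain ⟨m, rfl⟩ := AddSubgroup.mem_zmultiples_iff.mp hx
    rw [zsmul_eq_mul] at hlt ⊢
    exact ⟨m, e, (abs_lt_iff m e).mp hlt, he, rfl⟩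

theorem sterbenz_general {β emin k : ℤ} {x y : ℝ} (hβ : β ≠ 0) (hx : IsFPNb β emin k x)
    (hy : IsFPNb β emin k y) (hxy : |x - y| ≤ min |x| |y|) : IsFPNb β emin k (x - y) := by
  rw [isFPNb_iff_exists_mem_zmultiples hβ] at hx hy ⊢
  obtain ⟨e, he, hxe, hx_lt⟩ := hx
  obtain ⟨f, hf, hyf, hy_lt⟩ := hy
  obtain ⟨hle_x, hle_y⟩ := le_min_iff.mp hxy
  have step_anti := antitone_zmultiples_zpow (K := ℝ) (Int.cast_ne_zero.mpr hβ)
  rcases le_total e f with hef | hfe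
  · exact ⟨e, he, sub_mem hxe (step_anti hef hyf), hle_x.trans_lt hx_lt⟩
  · exact ⟨f, hf, sub_mem (step_anti hfe hxe) hyf, hle_y.trans_lt hy_lt⟩

/-- Sterbenz's theorem. -/
theorem sterbenz (β p emin : ℤ) (hβ : 2 ≤ β) (hp : 2 ≤ p)
    (x y : ℝ) (hx : IsFPNb β emin p x) (hy : IsFPNb β emin p y)
    (h1 : y / 2 ≤ x) (h2 : x ≤ 2 * y) :
    IsFPNb β emin p (x - y) :=
  sterbenz_general (by lia) hx hy (abs_sub_le_min_abs_of_half_le_of_le_two_mul h1 h2)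
end
end

section
/- Extended Sterbenz theorem (SterbenzApprox2): Let β ≥ 2 be an integer radix, p₁, p₂ ≥ 2 integer precisions (no order between p₁ and p₂ is assumed), and e_min an integer minimal exponent. If x and y are p₁-digit radix-β floating-point numbers and y/(1 + β^(p₂−p₁)) ≤ x ≤ (1 + β^(p₂−p₁))·y, then x − y is a p₂-digit radix-β floating-point number. -/
noncomputable section

/-!
Between two floating-point numbers, the one with the smaller exponent `e` fixes a grid `β ^ e * ℤ`
that contains them both, hence also their difference. If the difference is at most `β ^ (q - p)`
times that number, whose coefficient on the grid is below `β ^ p`, then its own coefficient is below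
`β ^ q`. The two inequalities of the theorem bound `|x - y|` relative to `x` and relative to `y`, so
it does not matter which of the two has the smaller exponent.
-/

theorem abs_sub_le_mul_abs_of_le_one_add_mul {R : Type*} [Ring R] [LinearOrder R]
    [IsOrderedRing R] {c x y : R} (hc : 0 ≤ c) (hxy : x ≤ (1 + c) * y)
    (hyx : y ≤ (1 + c) * x) : |x - y| ≤ c * |x| := by
  rw [one_add_mul, ← sub_le_iff_le_add'] at hxy hyx
  suffices |x - y| ≤ c * x from this.trans (by gcongr; exact le_abs_self x)
  rcases le_total x y with hle | hle
  · rwa [abs_sub_comm, abs_of_nonneg (sub_nonneg.2 hle)]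
  · rw [abs_of_nonneg (sub_nonneg.2 hle)]
    exact hxy.trans (by gcongr)

theorem exists_intCast_mul_zpow_eq_of_le {K : Type*} [DivisionRing K] {β e f : ℤ}
    (hβ : (β : K) ≠ 0) (hef : e ≤ f) (n : ℤ) :
    ∃ l : ℤ, (n : K) * (β : K) ^ f = l * (β : K) ^ e := by
  obtain ⟨d, rfl⟩ := Int.le.dest hef
  refine ⟨n * β ^ d, ?_⟩
  rw [add_comm e, zpow_add₀ hβ, zpow_natCast, ← mul_assoc]
  push_cast
  rfl

theorem IsFPNb.neg {β emin k : ℤ} {x : ℝ} (hx : IsFPNb β emin k x) : IsFPNb β emin k (-x) := by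
  obtain ⟨m, e, hm, he, rfl⟩ := hx
  exact ⟨-m, e, by simpa using hm, he, by push_cast; ring⟩

theorem isFPNb_intCast_mul_zpow_of_abs_le {β emin p q m n e : ℤ} (hβ : 0 < β)
    (hm : |(m : ℝ)| < (β : ℝ) ^ p) (he : emin ≤ e)
    (hnm : |(n : ℝ) * (β : ℝ) ^ e| ≤ (β : ℝ) ^ (q - p) * |(m : ℝ) * (β : ℝ) ^ e|) :
    IsFPNb β emin q ((n : ℝ) * (β : ℝ) ^ e) := by
  have hβ' : (0 : ℝ) < β := by exact_mod_cast hβ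
  have hpow : (0 : ℝ) < (β : ℝ) ^ e := zpow_pos hβ' e
  rw [abs_mul, abs_mul, abs_of_pos hpow, ← mul_assoc] at hnm
  refine ⟨n, e, ?_, he, rfl⟩
  calc |(n : ℝ)| ≤ (β : ℝ) ^ (q - p) * |(m : ℝ)| := le_of_mul_le_mul_right hnm hpow
    _ < (β : ℝ) ^ (q - p) * (β : ℝ) ^ p := by gcongr
    _ = (β : ℝ) ^ q := by rw [← zpow_add₀ hβ'.ne', sub_add_cancel]

theorem isFPNb_sub_of_exponent_le {β emin p q m n e f : ℤ} (hβ : 0 < β)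
    (hm : |(m : ℝ)| < (β : ℝ) ^ p) (he : emin ≤ e) (hef : e ≤ f)
    (hsub : |(m : ℝ) * (β : ℝ) ^ e - n * (β : ℝ) ^ f|
      ≤ (β : ℝ) ^ (q - p) * |(m : ℝ) * (β : ℝ) ^ e|) :
    IsFPNb β emin q ((m : ℝ) * (β : ℝ) ^ e - n * (β : ℝ) ^ f) := by
  have hβ' : (β : ℝ) ≠ 0 := by exact_mod_cast hβ.ne'
  obtain ⟨l, hl⟩ := exists_intCast_mul_zpow_eq_of_le hβ' hef n
  rw [hl, ← sub_mul, ← Int.cast_sub] at hsub ⊢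
  exact isFPNb_intCast_mul_zpow_of_abs_le hβ hm he hsub

theorem sterbenzApprox2_general {β emin p p' q : ℤ} {x y : ℝ} (hβ : 0 < β)
    (hx : IsFPNb β emin p x) (hy : IsFPNb β emin p' y)
    (hxy : |x - y| ≤ (β : ℝ) ^ (q - p) * |x|)
    (hyx : |y - x| ≤ (β : ℝ) ^ (q - p') * |y|) :
    IsFPNb β emin q (x - y) := by
  obtain ⟨m, e, hm, he, rfl⟩ := hx
  obtain ⟨n, f, hn, hf, rfl⟩ := hy
  rcases le_total e f with hef | hfe
  · exact isFPNb_sub_of_exponent_le hβ hm he hef hxy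
  · rw [← neg_sub]
    exact (isFPNb_sub_of_exponent_le hβ hn hf hfe hyx).neg

/-- Extended Sterbenz theorem (SterbenzApprox2). -/
theorem sterbenzApprox2 (β p₁ p₂ emin : ℤ) (hβ : 2 ≤ β) (hp1 : 2 ≤ p₁) (hp2 : 2 ≤ p₂)
    (x y : ℝ) (hx : IsFPNb β emin p₁ x) (hy : IsFPNb β emin p₁ y)
    (h1 : y / (1 + (β : ℝ) ^ (p₂ - p₁)) ≤ x)
    (h2 : x ≤ (1 + (β : ℝ) ^ (p₂ - p₁)) * y) :
    IsFPNb β emin p₂ (x - y) := by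
  have hβ' : 0 < β := by lia
  have hc : (0 : ℝ) < (β : ℝ) ^ (p₂ - p₁) := zpow_pos (by exact_mod_cast hβ') _
  have hyx : y ≤ (1 + (β : ℝ) ^ (p₂ - p₁)) * x := (div_le_iff₀' (by positivity)).1 h1
  exact sterbenzApprox2_general hβ' hx hy
    (abs_sub_le_mul_abs_of_le_one_add_mul hc.le h2 hyx)
    (abs_sub_le_mul_abs_of_le_one_add_mul hc.le hyx h2)
end
end

section
/- Correctness of the algorithm producing z (arg_reduct_exists_k_zH): Assume p > 3, x is a p-bit FPN, R is a positive normal p-bit FPN, N is an integer such that 2^(−N) is a p-bit FPN, |x·R| ≤ 2^(p−N−2) − 2^(−N), z₀ is a round-to-nearest of 3·2^(p−N−2) + x·R to p bits, z is a round-to-nearest of z₀ − 3·2^(p−N−2) to p bits, and |z| ≥ 2^(1−N). Then there exists an integer ℓ with 2 ≤ ℓ ≤ p − 2 such that z·2^N is an integer with 2^(ℓ−1) ≤ |z·2^N| < 2^ℓ, and |x·R − z| ≤ 2^(−N−1). -/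
noncomputable section

/-- `x` is a `k`-bit (binary) floating-point number with minimal exponent `emin`:
there exist integers `m`, `e` with `|m| < 2^k`, `e ≥ emin` and `x = m·2^e`. -/
def IsFPN (emin k : ℤ) (x : ℝ) : Prop :=
  ∃ m e : ℤ, |(m : ℝ)| < (2 : ℝ) ^ k ∧ emin ≤ e ∧ x = (m : ℝ) * (2 : ℝ) ^ e

/-- `x` is a normal `p`-bit floating-point number: it admits a representation
with `2^(p-1) ≤ |m| < 2^p`. -/
def IsNormalFPN (emin p : ℤ) (x : ℝ) : Prop :=
  ∃ m e : ℤ, (2 : ℝ) ^ (p - 1) ≤ |(m : ℝ)| ∧ |(m : ℝ)| < (2 : ℝ) ^ p ∧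
    emin ≤ e ∧ x = (m : ℝ) * (2 : ℝ) ^ e

/-- `r` is a round-to-nearest of `a` to `k` bits (ties broken in any way). -/
def RN (emin k : ℤ) (a r : ℝ) : Prop :=
  IsFPN emin k r ∧ ∀ y : ℝ, IsFPN emin k y → |a - r| ≤ |a - y|

/-- Unit in the last place at precision `p`: `ulp(x) = 2^(⌊log₂|x|⌋ - p + 1)`. -/
def ulp (p : ℤ) (x : ℝ) : ℝ := (2 : ℝ) ^ (Int.log 2 |x| - p + 1)

/-!
The constant `3 * 2 ^ (p - N - 2)` pushes `u = x * R` into the binade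
`[2 ^ (p - 1 - N), 2 ^ (p - N)]`, where the `p`-bit numbers are exactly the multiples of `2 ^ (-N)`.
The fused operation therefore rounds to that grid with error at most `2 ^ (-N) / 2`. The constant
lies on the grid as well, so the subtraction has a small grid point as its exact result and commits
no further error.
-/

open AddSubgroup Set

section Grid

lemma zpow_mem_zmultiples_zpow {K : Type*} [DivisionRing K] {b : ℕ} (hb : (b : K) ≠ 0) {i j : ℤ}
    (hij : i ≤ j) : (b : K) ^ j ∈ zmultiples ((b : K) ^ i) := by
  obtain ⟨d, rfl⟩ := Int.le.dest hij
  refine mem_zmultiples_iff.2 ⟨(b : ℤ) ^ d, ?_⟩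
  rw [zsmul_eq_mul, add_comm, zpow_add₀ hb, zpow_natCast]
  push_cast
  rfl

lemma le_of_mem_zmultiples_of_lt_add {G : Type*} [AddCommGroup G] [PartialOrder G]
    [IsOrderedAddMonoid G] {c x y : G} (hc : 0 < c) (hx : x ∈ zmultiples c)
    (hy : y ∈ zmultiples c) (hxy : x < y + c) : x ≤ y := by
  obtain ⟨m, rfl⟩ := mem_zmultiples_iff.1 hx
  obtain ⟨n, rfl⟩ := mem_zmultiples_iff.1 hy
  rw [← add_one_zsmul, zsmul_lt_zsmul_iff_left hc] at hxy
  exact zsmul_le_zsmul_left hc.le (Int.lt_add_one_iff.1 hxy)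

variable {K : Type*} [Field K] [LinearOrder K] [IsStrictOrderedRing K]

lemma exists_mem_zmultiples_abs_sub_le [FloorRing K] {c : K} (hc : 0 < c) (x : K) :
    ∃ y ∈ zmultiples c, |x - y| ≤ c / 2 := by
  refine ⟨round (x / c) • c, zsmul_mem_zmultiples c _, ?_⟩
  calc |x - round (x / c) • c| = |x / c - round (x / c)| * c := by
        rw [← abs_of_pos hc, ← abs_mul, abs_of_pos hc, sub_mul, div_mul_cancel₀ _ hc.ne',
          zsmul_eq_mul]
    _ ≤ 1 / 2 * c := by gcongr; exact abs_sub_round _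
    _ = c / 2 := by ring

lemma exists_mem_Ico_zpow_of_mem_Ico_zpow [Archimedean K] {b x : K} (hb : 1 < b) {i j : ℤ}
    (hx : x ∈ Ico (b ^ i) (b ^ j)) : ∃ n ∈ Ico i j, x ∈ Ico (b ^ n) (b ^ (n + 1)) := by
  obtain ⟨n, hn⟩ := exists_mem_Ico_zpow ((zpow_pos (one_pos.trans hb) i).trans_le hx.1) hb
  have hin : i < n + 1 := (zpow_lt_zpow_iff_right₀ hb).1 (hx.1.trans_lt hn.2)
  have hnj : n < j := (zpow_lt_zpow_iff_right₀ hb).1 (hn.1.trans_lt hx.2)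
  exact ⟨n, ⟨Int.lt_add_one_iff.1 hin, hnj⟩, hn⟩

end Grid

section FloatingPoint

variable {emin k i j : ℤ} {a r y : ℝ}

lemma two_zpow_mem_zmultiples (hij : i ≤ j) : (2 : ℝ) ^ j ∈ zmultiples ((2 : ℝ) ^ i) :=
  mod_cast zpow_mem_zmultiples_zpow (K := ℝ) (b := 2) (by simp) hij

lemma IsFPN.emin_le_of_two_zpow (h : IsFPN emin k (2 ^ j)) : emin ≤ j := by
  obtain ⟨m, e, -, he, hj⟩ := h
  have hm : (1 : ℝ) ≤ m := by
    have hpos : (0 : ℝ) < m * 2 ^ e := hj ▸ by positivity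
    exact_mod_cast pos_of_mul_pos_left hpos (by positivity)
  have hle : (2 : ℝ) ^ e ≤ 2 ^ j := hj ▸ le_mul_of_one_le_left (by positivity) hm
  exact he.trans ((zpow_le_zpow_iff_right₀ one_lt_two).1 hle)

lemma isFPN_two_zpow (hk : 0 < k) (hj : emin ≤ j) : IsFPN emin k (2 ^ j) :=
  ⟨1, j, by simpa using one_lt_zpow₀ (one_lt_two (α := ℝ)) hk, hj, by simp⟩

lemma IsFPN.neg (h : IsFPN emin k r) : IsFPN emin k (-r) := by
  obtain ⟨m, e, hm, he, rfl⟩ := h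
  exact ⟨-m, e, by simpa using hm, he, by simp⟩

lemma IsFPN.mem_zmultiples (h : IsFPN emin k r) (hr : (2 : ℝ) ^ (k - 1 + j) ≤ |r|) :
    r ∈ zmultiples ((2 : ℝ) ^ j) := by
  obtain ⟨m, e, hm, -, rfl⟩ := h
  have hlt : (2 : ℝ) ^ (k - 1 + j) < 2 ^ (k + e) := by
    rw [abs_mul, abs_zpow, abs_two] at hr
    rw [zpow_add₀ two_ne_zero k e]
    exact hr.trans_lt (by gcongr)
  have hje : j ≤ e := by
    have := (zpow_lt_zpow_iff_right₀ one_lt_two).1 hlt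
    omega
  rw [← zsmul_eq_mul]
  exact zsmul_mem (two_zpow_mem_zmultiples hje) m

lemma isFPN_of_mem_zmultiples (hk : 0 < k) (hj : emin ≤ j) (hr : r ∈ zmultiples ((2 : ℝ) ^ j))
    (hle : |r| ≤ 2 ^ (k + j)) : IsFPN emin k r := by
  rcases hle.lt_or_eq with hlt | heq
  · obtain ⟨m, rfl⟩ := mem_zmultiples_iff.1 hr
    rw [zsmul_eq_mul] at hlt ⊢
    rw [abs_mul, abs_zpow, abs_two, zpow_add₀ two_ne_zero] at hlt
    exact ⟨m, j, lt_of_mul_lt_mul_right hlt (by positivity), hj, rfl⟩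
  -- `2 ^ (k + j)` itself has significand `1`, not the out-of-range `2 ^ k`.
  · have hpow : IsFPN emin k (2 ^ (k + j)) := isFPN_two_zpow hk (by omega)
    rcases eq_or_eq_neg_of_abs_eq heq with rfl | rfl
    exacts [hpow, hpow.neg]

lemma RN.eq_of_isFPN (h : RN emin k a r) (ha : IsFPN emin k a) : r = a := by
  have hdist : |a - r| ≤ 0 := by simpa using h.2 a ha
  exact (sub_eq_zero.1 (abs_nonpos_iff.1 hdist)).symm

lemma RN.le_of_isFPN_of_le (h : RN emin k a r) (hy : IsFPN emin k y) (hya : y ≤ a) : y ≤ r := by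
  by_contra! hry
  have hdist := h.2 y hy
  rw [abs_of_nonneg (by linarith), abs_of_nonneg (by linarith)] at hdist
  linarith

lemma RN.mem_zmultiples (h : RN emin k a r) (hk : 0 < k) (hj : emin ≤ j)
    (ha : (2 : ℝ) ^ (k - 1 + j) ≤ a) : r ∈ zmultiples ((2 : ℝ) ^ j) :=
  h.1.mem_zmultiples
    ((h.le_of_isFPN_of_le (isFPN_two_zpow hk (by omega)) ha).trans (le_abs_self r))

lemma RN.abs_sub_le (h : RN emin k a r) (hk : 0 < k) (hj : emin ≤ j) (ha : |a| ≤ 2 ^ (k + j)) :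
    |a - r| ≤ 2 ^ j / 2 := by
  have hpos : (0 : ℝ) < 2 ^ j := by positivity
  obtain ⟨y, hy, hay⟩ := exists_mem_zmultiples_abs_sub_le hpos a
  have hpow : (2 : ℝ) ^ (k + j) ∈ zmultiples ((2 : ℝ) ^ j) :=
    two_zpow_mem_zmultiples (by omega)
  have hy_le : |y| ≤ 2 ^ (k + j) := by
    refine le_of_mem_zmultiples_of_lt_add hpos (abs_mem_iff.2 hy) hpow ?_
    have hya := abs_sub_abs_le_abs_sub y a
    rw [abs_sub_comm y a] at hya
    linarith
  exact (h.2 y (isFPN_of_mem_zmultiples hk hj hy hy_le)).trans hay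

end FloatingPoint

section Shift

variable {p emin N : ℤ} {u z₀ z : ℝ}

lemma RN.sub_shift_mem_zmultiples_and_abs_sub_le (hp : 2 ≤ p) (hN : emin ≤ -N)
    (hu : |u| ≤ 2 ^ (p - N - 2)) (hz₀ : RN emin p (3 * 2 ^ (p - N - 2) + u) z₀) :
    z₀ - 3 * 2 ^ (p - N - 2) ∈ zmultiples ((2 : ℝ) ^ (-N)) ∧
      |u - (z₀ - 3 * 2 ^ (p - N - 2))| ≤ 2 ^ (-N) / 2 := by
  have hlo : (2 : ℝ) ^ (p - 1 + -N) = 2 * 2 ^ (p - N - 2) := by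
    rw [← zpow_one_add₀ two_ne_zero]
    ring_nf
  have hhi : (2 : ℝ) ^ (p + -N) = 4 * 2 ^ (p - N - 2) := by
    rw [show p + -N = p - N - 2 + 2 by ring, zpow_add₀ two_ne_zero]
    norm_num [mul_comm]
  obtain ⟨hu_lo, hu_hi⟩ := abs_le.1 hu
  have hshift : 3 * (2 : ℝ) ^ (p - N - 2) ∈ zmultiples ((2 : ℝ) ^ (-N)) := by
    have hpow : (2 : ℝ) ^ (p - N - 2) ∈ zmultiples ((2 : ℝ) ^ (-N)) :=
      two_zpow_mem_zmultiples (by omega)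
    simpa using nsmul_mem hpow 3
  constructor
  · exact sub_mem (hz₀.mem_zmultiples (by omega) hN (by linarith)) hshift
  · have hdist := hz₀.abs_sub_le (by omega) hN (abs_le.2 ⟨by linarith, by linarith⟩)
    rwa [show u - (z₀ - 3 * 2 ^ (p - N - 2)) = 3 * 2 ^ (p - N - 2) + u - z₀ by ring]

lemma RN.eq_sub_shift (hp : 2 ≤ p) (hN : emin ≤ -N) (hu : |u| ≤ 2 ^ (p - N - 2))
    (hz₀ : RN emin p (3 * 2 ^ (p - N - 2) + u) z₀)
    (hz : RN emin p (z₀ - 3 * 2 ^ (p - N - 2)) z) : z = z₀ - 3 * 2 ^ (p - N - 2) := by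
  obtain ⟨hmem, hdist⟩ := RN.sub_shift_mem_zmultiples_and_abs_sub_le hp hN hu hz₀
  refine hz.eq_of_isFPN (isFPN_of_mem_zmultiples (by omega) hN hmem ?_)
  set d := z₀ - 3 * 2 ^ (p - N - 2)
  have hgrid : (2 : ℝ) ^ (-N) ≤ 2 ^ (p - N - 2) := zpow_le_zpow_right₀ one_le_two (by omega)
  calc |d| ≤ |u| + |u - d| := by linarith [abs_sub_abs_le_abs_sub d u, abs_sub_comm d u]
    _ ≤ 2 ^ (p - N - 2) + 2 ^ (p - N - 2) := by linarith [zpow_pos (two_pos (α := ℝ)) (-N)]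
    _ = 2 ^ (p - N - 2 + 1) := by rw [zpow_add_one₀ two_ne_zero]; ring
    _ ≤ 2 ^ (p + -N) := zpow_le_zpow_right₀ one_le_two (by omega)

end Shift

theorem arg_reduct_exists_k_zH_general (p emin N : ℤ) (u z₀ z : ℝ) (hN : emin ≤ -N)
    (hu : |u| ≤ (2 : ℝ) ^ (p - N - 2) - (2 : ℝ) ^ (-N))
    (hz₀ : RN emin p (3 * (2 : ℝ) ^ (p - N - 2) + u) z₀)
    (hz : RN emin p (z₀ - 3 * (2 : ℝ) ^ (p - N - 2)) z)
    (hzbig : (2 : ℝ) ^ (1 - N) ≤ |z|) :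
    ∃ ℓ : ℤ, 2 ≤ ℓ ∧ ℓ ≤ p - 2 ∧
      (∃ k : ℤ, z * (2 : ℝ) ^ N = (k : ℝ)) ∧
      (2 : ℝ) ^ (ℓ - 1) ≤ |z * (2 : ℝ) ^ N| ∧
      |z * (2 : ℝ) ^ N| < (2 : ℝ) ^ ℓ ∧
      |u - z| ≤ (2 : ℝ) ^ (-N - 1) := by
  have hgrid : (0 : ℝ) < 2 ^ (-N) := by positivity
  have hp : 2 ≤ p := by
    have := (zpow_le_zpow_iff_right₀ (one_lt_two (α := ℝ))).1
      (sub_nonneg.1 ((abs_nonneg u).trans hu))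
    omega
  have hu' : |u| ≤ 2 ^ (p - N - 2) := hu.trans (sub_le_self _ hgrid.le)
  obtain ⟨hmem, hdist⟩ := RN.sub_shift_mem_zmultiples_and_abs_sub_le hp hN hu' hz₀
  rw [← RN.eq_sub_shift hp hN hu' hz₀ hz] at hmem hdist
  have hzlt : |z| < 2 ^ (p - N - 2) := by
    linarith [abs_sub_abs_le_abs_sub z u, abs_sub_comm z u]
  have hscale : |z * 2 ^ N| = |z| * 2 ^ N := by rw [abs_mul, abs_zpow, abs_two]
  have hlo : (2 : ℝ) ^ (1 : ℤ) ≤ |z * 2 ^ N| := by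
    rwa [hscale, ← div_le_iff₀ (by positivity), ← zpow_sub₀ two_ne_zero]
  have hhi : |z * 2 ^ N| < 2 ^ (p - 2) := by
    rwa [hscale, ← lt_div_iff₀ (by positivity), ← zpow_sub₀ two_ne_zero, sub_right_comm]
  obtain ⟨n, ⟨hn, hnp⟩, hle, hlt⟩ := exists_mem_Ico_zpow_of_mem_Ico_zpow one_lt_two ⟨hlo, hhi⟩
  obtain ⟨k, rfl⟩ := mem_zmultiples_iff.1 hmem
  refine ⟨n + 1, by omega, by omega, ⟨k, ?_⟩, by rwa [add_sub_cancel_right], hlt, ?_⟩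
  · rw [zsmul_eq_mul, zpow_neg, inv_mul_cancel_right₀ (by positivity)]
  · rwa [zpow_sub_one₀ two_ne_zero, ← div_eq_mul_inv]

/-- Correctness of the algorithm producing `z` (arg_reduct_exists_k_zH). -/
theorem arg_reduct_exists_k_zH (p emin N : ℤ) (hp : 3 < p)
    (x R z₀ z : ℝ)
    (hx : IsFPN emin p x)
    (hRpos : 0 < R) (hRnorm : IsNormalFPN emin p R)
    (hN : IsFPN emin p ((2 : ℝ) ^ (-N)))
    (hxR : |x * R| ≤ (2 : ℝ) ^ (p - N - 2) - (2 : ℝ) ^ (-N))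
    (hz₀ : RN emin p (3 * (2 : ℝ) ^ (p - N - 2) + x * R) z₀)
    (hz : RN emin p (z₀ - 3 * (2 : ℝ) ^ (p - N - 2)) z)
    (hzbig : (2 : ℝ) ^ (1 - N) ≤ |z|) :
    ∃ ℓ : ℤ, 2 ≤ ℓ ∧ ℓ ≤ p - 2 ∧
      (∃ k : ℤ, z * (2 : ℝ) ^ N = (k : ℝ)) ∧
      (2 : ℝ) ^ (ℓ - 1) ≤ |z * (2 : ℝ) ^ N| ∧
      |z * (2 : ℝ) ^ N| < (2 : ℝ) ^ ℓ ∧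
      |x * R - z| ≤ (2 : ℝ) ^ (-N - 1) :=
  arg_reduct_exists_k_zH_general p emin N (x * R) z₀ z hN.emin_le_of_two_zpow hxR hz₀ hz hzbig
end
end

section
/- The special case z = 2^(−N) of the first reduction step: Let p > 3 and N be integers, let C₁ be a (p−2)-bit FPN (so C₁ = m·2^e with 2^(p−3) ≤ m < 2^(p−2)) that is not exactly a power of 2, and let x be a p-bit FPN with C₁·2^(−N)/(1 + 2^(2−p)) ≤ x ≤ 2·C₁·2^(−N), where no underflow occurs (C₁ ≥ 2^(p+max(−1,N))·λ and 2^(−N) is a p-bit FPN). Then x − C₁·2^(−N) is a p-bit FPN. -/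
noncomputable section

/-!
Scaling `C₁` by `2 ^ (-N)` only shifts its exponent, and the lower bound on `C₁` keeps the shifted
exponent in range, so `y = C₁ * 2 ^ (-N)` is again a `p`-bit number. Since `1 + 2 ^ (2 - p) ≤ 2`,
the bounds on `x` give `y / 2 ≤ x ≤ 2 * y`, and Sterbenz's lemma applies: `x - y` is a multiple of
the smaller of the units of `x` and `y`, and is at most as large as either number.
-/

theorem isFPN_iff_abs_lt {emin k : ℤ} {x : ℝ} :
    IsFPN emin k x ↔ ∃ m e : ℤ, |x| < (2 : ℝ) ^ (k + e) ∧ emin ≤ e ∧ x = m * (2 : ℝ) ^ e := by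
  refine exists₂_congr fun m e => and_congr_left ?_
  rintro ⟨-, rfl⟩
  have he : (0 : ℝ) < 2 ^ e := by positivity
  rw [abs_mul, abs_of_pos he, zpow_add₀ two_ne_zero, mul_lt_mul_iff_left₀ he]

theorem exists_intCast_mul_two_zpow_eq_of_le (m : ℤ) {g e : ℤ} (hge : g ≤ e) :
    ∃ n : ℤ, (m : ℝ) * (2 : ℝ) ^ e = n * (2 : ℝ) ^ g := by
  obtain ⟨k, rfl⟩ := Int.le.dest hge
  refine ⟨m * 2 ^ k, ?_⟩
  rw [zpow_add₀ two_ne_zero, zpow_natCast]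
  push_cast
  ring

namespace IsFPN

variable {emin k : ℤ} {x y : ℝ}

theorem mono {l : ℤ} (hx : IsFPN emin k x) (hkl : k ≤ l) : IsFPN emin l x := by
  obtain ⟨m, e, hm, he, hxe⟩ := hx
  exact ⟨m, e, hm.trans_le (zpow_le_zpow_right₀ one_le_two hkl), he, hxe⟩

theorem mul_two_zpow (hx : IsFPN emin k x) (n : ℤ) : IsFPN (emin + n) k (x * (2 : ℝ) ^ n) := by
  obtain ⟨m, e, hm, he, rfl⟩ := hx
  exact ⟨m, e + n, hm, by gcongr, by rw [zpow_add₀ two_ne_zero, mul_assoc]⟩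

theorem of_two_zpow_le_abs {emin' : ℤ} (hx : IsFPN emin k x)
    (hle : (2 : ℝ) ^ (k - 1 + emin') ≤ |x|) : IsFPN emin' k x := by
  obtain ⟨m, e, hlt, -, hxe⟩ := isFPN_iff_abs_lt.1 hx
  have hexp : k - 1 + emin' < k + e := (zpow_lt_zpow_iff_right₀ one_lt_two).1 (hle.trans_lt hlt)
  exact isFPN_iff_abs_lt.2 ⟨m, e, hlt, by omega, hxe⟩

theorem sub_of_abs_sub_le (hx : IsFPN emin k x) (hy : IsFPN emin k y)
    (hle_x : |x - y| ≤ |x|) (hle_y : |x - y| ≤ |y|) : IsFPN emin k (x - y) := by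
  obtain ⟨m, e, hx_lt, he, hxe⟩ := isFPN_iff_abs_lt.1 hx
  obtain ⟨n, f, hy_lt, hf, hyf⟩ := isFPN_iff_abs_lt.1 hy
  obtain ⟨m', hm'⟩ := exists_intCast_mul_two_zpow_eq_of_le m (min_le_left e f)
  obtain ⟨n', hn'⟩ := exists_intCast_mul_two_zpow_eq_of_le n (min_le_right e f)
  have habs : |x - y| < (2 : ℝ) ^ (k + min e f) := by
    rcases min_choice e f with h | h <;> rw [h]
    exacts [hle_x.trans_lt hx_lt, hle_y.trans_lt hy_lt]
  refine isFPN_iff_abs_lt.2 ⟨m' - n', min e f, habs, le_min he hf, ?_⟩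
  rw [hxe, hyf, hm', hn', Int.cast_sub, sub_mul]

/-- Sterbenz's lemma. -/
theorem sub_of_half_le_of_le_two_mul (hx : IsFPN emin k x) (hy : IsFPN emin k y)
    (hyx : y / 2 ≤ x) (hxy : x ≤ 2 * y) : IsFPN emin k (x - y) := by
  have hy0 : 0 ≤ y := by linarith
  have hx0 : 0 ≤ x := by linarith
  apply hx.sub_of_abs_sub_le hy
  · rw [abs_of_nonneg hx0, abs_le]
    constructor <;> linarith
  · rw [abs_of_nonneg hy0, abs_le]
    constructor <;> linarith

end IsFPN

theorem half_le_of_div_one_add_two_zpow_le {p : ℤ} {x y : ℝ} (hp : 2 ≤ p) (hy : 0 ≤ y)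
    (hyx : y / (1 + (2 : ℝ) ^ (2 - p)) ≤ x) : y / 2 ≤ x := by
  have hpow : (2 : ℝ) ^ (2 - p) ≤ 1 := zpow_le_one_of_nonpos₀ one_le_two (by omega)
  exact (div_le_div_of_nonneg_left hy (by positivity) (by linarith)).trans hyx

theorem special_case_z_pow_general {p emin emin' N : ℤ} {C₁ x : ℝ}
    (hC₁ : IsFPN emin' p C₁) (hx : IsFPN emin p x)
    (hx1 : C₁ * (2 : ℝ) ^ (-N) / 2 ≤ x) (hx2 : x ≤ 2 * (C₁ * (2 : ℝ) ^ (-N)))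
    (hC₁big : (2 : ℝ) ^ (p - 1 + N) * (2 : ℝ) ^ emin ≤ C₁) :
    IsFPN emin p (x - C₁ * (2 : ℝ) ^ (-N)) := by
  have hle : (2 : ℝ) ^ (p - 1 + emin) ≤ C₁ * (2 : ℝ) ^ (-N) :=
    calc (2 : ℝ) ^ (p - 1 + emin)
        = (2 : ℝ) ^ (p - 1 + N) * (2 : ℝ) ^ emin * (2 : ℝ) ^ (-N) := by
          rw [← zpow_add₀ two_ne_zero, ← zpow_add₀ two_ne_zero]
          ring_nf
      _ ≤ C₁ * (2 : ℝ) ^ (-N) := by gcongr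
  have hy : IsFPN emin p (C₁ * (2 : ℝ) ^ (-N)) :=
    (hC₁.mul_two_zpow (-N)).of_two_zpow_le_abs (hle.trans (le_abs_self _))
  exact hx.sub_of_half_le_of_le_two_mul hy hx1 hx2

/-- The special case `z = 2^(-N)` of the first reduction step. -/
theorem special_case_z_pow (p emin N : ℤ) (hp : 3 < p)
    (m e : ℤ) (C₁ x : ℝ)
    (hm1 : (2 : ℝ) ^ (p - 3) ≤ (m : ℝ)) (hm2 : (m : ℝ) < (2 : ℝ) ^ (p - 2))
    (hC₁ : C₁ = (m : ℝ) * (2 : ℝ) ^ e) (hemin : emin ≤ e)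
    (hC₁pow : ∀ j : ℤ, C₁ ≠ (2 : ℝ) ^ j)
    (hx : IsFPN emin p x)
    (hx1 : C₁ * (2 : ℝ) ^ (-N) / (1 + (2 : ℝ) ^ (2 - p)) ≤ x)
    (hx2 : x ≤ 2 * (C₁ * (2 : ℝ) ^ (-N)))
    (hC₁big : (2 : ℝ) ^ (p + max (-1) N) * (2 : ℝ) ^ emin ≤ C₁)
    (hN : IsFPN emin p ((2 : ℝ) ^ (-N))) :
    IsFPN emin p (x - C₁ * (2 : ℝ) ^ (-N)) := by
  have hm : |(m : ℝ)| < 2 ^ (p - 2) := by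
    rwa [abs_of_nonneg (le_trans (by positivity) hm1)]
  have hC₁FPN : IsFPN emin (p - 2) C₁ := ⟨m, e, hm, hemin, hC₁⟩
  have hC₁nonneg : 0 ≤ C₁ := le_trans (by positivity) hC₁big
  have hhalf : C₁ * (2 : ℝ) ^ (-N) / 2 ≤ x :=
    half_le_of_div_one_add_two_zpow_le (by omega) (by positivity) hx1
  have hexp : (2 : ℝ) ^ (p - 1 + N) ≤ 2 ^ (p + max (-1) N) :=
    zpow_le_zpow_right₀ one_le_two (by omega)
  exact special_case_z_pow_general (hC₁FPN.mono (by omega)) hx hhalf hx2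
    (le_trans (by gcongr) hC₁big)
end
end
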